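/- For every f in the Schwartz space on ℝ³ and every q ∈ [2,4], there is a constant C independent of f and q such that ‖f‖_{L^q_h(L²_v)} ≤ C·‖f‖_{L²}^{2/q}·‖∇_h f‖_{L²}^{1 - 2/q}, where ‖f‖_{L^q_h(L²_v)} = ‖ ‖f(x_h,·)‖_{L²(ℝ)} ‖_{L^q(ℝ²)} and ∇_h = (∂₁, ∂₂). -/

import Mathlib

/-!
Along any line in a horizontal direction, the fundamental theorem of calculus for `‖f‖²` gives
`‖f‖² ≤ 2 ∫ ‖f‖ ‖∇_h f‖`. Integrating over `x₃`, the function `G(x₁, x₂) = ‖f(x₁, x₂, ·)‖²_{L²_v}`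
is therefore bounded both by a function of `x₁` alone and by a function of `x₂` alone, so
`∫ G² ≤ (2 ∫ ‖f‖ ‖∇_h f‖)² ≤ (2 ‖f‖_{L²} ‖∇_h f‖_{L²})²`: this is the case `q = 4`. The case
`q = 2` is Tonelli's theorem, and log-convexity of `q ↦ ‖ ‖f‖_{L²_v} ‖_{L^q_h}` interpolates
between the two.
-/

open MeasureTheory Real Set
open scoped ENNReal

noncomputable section

abbrev R3 : Type := EuclideanSpace ℝ (Fin 3)
abbrev R2 : Type := EuclideanSpace ℝ (Fin 2)

/-- The point `(x₁, x₂, x₃) ∈ ℝ³ = ℝ²_h × ℝ_v`. -/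
def pt3 (x1 x2 x3 : ℝ) : R3 := (WithLp.equiv 2 (Fin 3 → ℝ)).symm ![x1, x2, x3]

/-- The anisotropic mixed norm `‖f‖_{L^p_h(L^q_v)}`: first the `L^q` norm in the vertical
variable `x₃`, then the `L^p` norm in the horizontal variables `x_h = (x₁, x₂)`. -/
def mixedNorm {E : Type*} [NormedAddCommGroup E] (p q : ℝ≥0∞) (f : R3 → E) : ℝ≥0∞ :=
  eLpNorm (fun xh : R2 =>
    (eLpNorm (fun x3 : ℝ => f (pt3 (xh 0) (xh 1) x3)) q volume).toReal) p volume

/-- Partial derivative in the `i`-th coordinate direction. -/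
def pderiv3 {E : Type*} [NormedAddCommGroup E] [NormedSpace ℝ E] (i : Fin 3) (f : R3 → E) :
    R3 → E := fun x => fderiv ℝ f x (EuclideanSpace.single i 1)

section AnisotropicGagliardoNirenberg

open Filter Topology
open scoped NNReal

section Line

variable {E : Type*} [NormedAddCommGroup E] [NormedSpace ℝ E]

lemma enorm_le_lintegral_enorm_deriv [CompleteSpace E] {g : ℝ → E} (hg : Differentiable ℝ g)
    (hg_lim : Tendsto g atBot (𝓝 0)) (a : ℝ) : ‖g a‖ₑ ≤ ∫⁻ s, ‖deriv g s‖ₑ := by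
  by_cases hfin : ∫⁻ s, ‖deriv g s‖ₑ = ∞
  · simp [hfin]
  have hint : Integrable (deriv g) := ⟨aestronglyMeasurable_deriv g _, lt_top_iff_ne_top.2 hfin⟩
  have hftc : ∫ s in Iic a, deriv g s = g a := by
    simpa using integral_Iic_of_hasDerivAt_of_tendsto' (fun s _ => (hg s).hasDerivAt)
      hint.integrableOn hg_lim
  calc ‖g a‖ₑ = ‖∫ s in Iic a, deriv g s‖ₑ := by rw [hftc]
    _ ≤ ∫⁻ s in Iic a, ‖deriv g s‖ₑ := enorm_integral_le_lintegral_enorm _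
    _ ≤ ∫⁻ s, ‖deriv g s‖ₑ := setLIntegral_le_lintegral _ _

lemma enorm_sq_le_two_mul_lintegral_enorm_mul_deriv {g : ℝ → E} (hg : Differentiable ℝ g)
    (hg_lim : Tendsto g atBot (𝓝 0)) (a : ℝ) :
    ‖g a‖ₑ ^ 2 ≤ 2 * ∫⁻ s, ‖g s‖ₑ * ‖deriv g s‖ₑ := by
  -- The norm need not be differentiable, so `‖g‖ ^ 2` is replaced by the square of `φ ∘ g` for a
  -- functional `φ` of norm at most one that attains the norm at `g a`.
  obtain ⟨φ, hφ, hφ_eq⟩ := exists_dual_vector'' ℝ (g a)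
  have hφ_le (x : E) : ‖φ x‖ₑ ≤ ‖x‖ₑ :=
    enorm_le_iff_norm_le.2 ((φ.le_of_opNorm_le hφ x).trans_eq (one_mul _))
  have hderiv (s : ℝ) : HasDerivAt (fun s => φ (g s) ^ 2) (2 * (φ (g s) * φ (deriv g s))) s := by
    have hφg : HasDerivAt (fun s => φ (g s)) (φ (deriv g s)) s :=
      φ.hasFDerivAt.comp_hasDerivAt s (hg s).hasDerivAt
    simpa [mul_assoc] using hφg.fun_pow 2
  have hlim : Tendsto (fun s => φ (g s) ^ 2) atBot (𝓝 0) := by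
    simpa using ((φ.continuous.tendsto 0).comp hg_lim).pow 2
  calc ‖g a‖ₑ ^ 2 = ‖φ (g a) ^ 2‖ₑ := by
        rw [hφ_eq, enorm_pow]
        simp
    _ ≤ ∫⁻ s, ‖deriv (fun s => φ (g s) ^ 2) s‖ₑ :=
        enorm_le_lintegral_enorm_deriv (fun s => (hderiv s).differentiableAt) hlim a
    _ ≤ ∫⁻ s, 2 * (‖g s‖ₑ * ‖deriv g s‖ₑ) := by
        refine lintegral_mono fun s => ?_
        rw [(hderiv s).deriv, enorm_mul, enorm_mul, Real.enorm_of_nonneg zero_le_two,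
          ENNReal.ofReal_ofNat]
        gcongr <;> exact hφ_le _
    _ = 2 * ∫⁻ s, ‖g s‖ₑ * ‖deriv g s‖ₑ := lintegral_const_mul' _ _ (by simp)

lemma tendsto_add_smul_atBot_cocompact {V : Type*} [NormedAddCommGroup V] [NormedSpace ℝ V] (p : V)
    {v : V} (hv : v ≠ 0) : Tendsto (fun s : ℝ => p + s • v) atBot (cocompact V) :=
  ((Homeomorph.addLeft p).isClosedEmbedding.comp
    (isClosedEmbedding_smul_left hv)).tendsto_cocompact.mono_left atBot_le_cocompact

lemma enorm_sq_le_two_mul_lintegral_line {V : Type*} [NormedAddCommGroup V] [NormedSpace ℝ V]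
    {f : V → E} (hf : Differentiable ℝ f) (hf_lim : Tendsto f (cocompact V) (𝓝 0)) (p : V) {v : V}
    (hv : v ≠ 0) (a : ℝ) :
    ‖f (p + a • v)‖ₑ ^ 2 ≤ 2 * ∫⁻ s : ℝ, ‖f (p + s • v)‖ₑ * ‖fderiv ℝ f (p + s • v) v‖ₑ := by
  have hderiv (s : ℝ) : HasDerivAt (fun s : ℝ => f (p + s • v)) (fderiv ℝ f (p + s • v) v) s := by
    have hline : HasDerivAt (fun s : ℝ => p + s • v) v s := by
      simpa using ((hasDerivAt_id s).smul_const v).const_add p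
    exact (hf _).hasFDerivAt.comp_hasDerivAt s hline
  simpa only [(hderiv _).deriv] using enorm_sq_le_two_mul_lintegral_enorm_mul_deriv
    (fun s => (hderiv s).differentiableAt)
    (hf_lim.comp (tendsto_add_smul_atBot_cocompact p hv)) a

end Line

section LpNorm

variable {α : Type*} [MeasurableSpace α] {μ : Measure α}

lemma eLpNorm_natCast_pow_eq_lintegral {ε : Type*} [ENorm ε] (f : α → ε) {n : ℕ} (hn : n ≠ 0) :
    eLpNorm f n μ ^ n = ∫⁻ x, ‖f x‖ₑ ^ n ∂μ := by
  simpa using eLpNorm_nnreal_pow_eq_lintegral (f := f) (μ := μ) (p := n) (by simpa using hn)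

lemma lintegral_enorm_mul_enorm_le {E F : Type*} [NormedAddCommGroup E] [NormedAddCommGroup F]
    {f : α → E} {g : α → F} (hf : AEStronglyMeasurable f μ) (hg : AEStronglyMeasurable g μ) :
    ∫⁻ x, ‖f x‖ₑ * ‖g x‖ₑ ∂μ ≤ eLpNorm f 2 μ * eLpNorm g 2 μ := by
  simpa [eLpNorm_one_eq_lintegral_enorm] using
    eLpNorm_le_eLpNorm_mul_eLpNorm_of_nnnorm (p := 2) (q := 2) (r := 1) hf hg
      (fun x y => ‖x‖ * ‖y‖) 1 (by simp)

lemma eLpNorm_le_eLpNorm_rpow_mul_eLpNorm_rpow {ε : Type*} [TopologicalSpace ε]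
    [ContinuousENorm ε] {f : α → ε} (hf : AEStronglyMeasurable f μ) {p q r : ℝ≥0} (hp : p ≠ 0)
    (hr : r ≠ 0) {s t : ℝ} (hs : 0 ≤ s) (ht : 0 ≤ t) (hst : s + t = 1)
    (hq : (q : ℝ)⁻¹ = s / p + t / r) :
    eLpNorm f q μ ≤ eLpNorm f p μ ^ s * eLpNorm f r μ ^ t := by
  obtain rfl | hq0 := eq_or_ne q 0
  · simp
  have hp' : (p : ℝ) ≠ 0 := by exact_mod_cast hp
  have hr' : (r : ℝ) ≠ 0 := by exact_mod_cast hr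
  have hq' : (q : ℝ) ≠ 0 := by exact_mod_cast hq0
  have hweights : s * (q / p) + t * (q / r) = 1 := by
    calc s * (q / p) + t * (q / r) = q * (s / p + t / r) := by ring
      _ = 1 := by rw [← hq, mul_inv_cancel₀ hq']
  have hpow : eLpNorm f q μ ^ (q : ℝ) ≤ (eLpNorm f p μ ^ s * eLpNorm f r μ ^ t) ^ (q : ℝ) := by
    calc eLpNorm f q μ ^ (q : ℝ)
        = ∫⁻ x, (‖f x‖ₑ ^ (p : ℝ)) ^ (s * (q / p)) * (‖f x‖ₑ ^ (r : ℝ)) ^ (t * (q / r)) ∂μ := by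
          rw [eLpNorm_nnreal_pow_eq_lintegral hq0]
          refine lintegral_congr fun x => ?_
          rw [← ENNReal.rpow_mul, ← ENNReal.rpow_mul,
            ← ENNReal.rpow_add_of_nonneg _ _ (by positivity) (by positivity)]
          congr 1
          field_simp
          exact hst.symm
      _ ≤ (eLpNorm f p μ ^ (p : ℝ)) ^ (s * (q / p)) *
            (eLpNorm f r μ ^ (r : ℝ)) ^ (t * (q / r)) := by
          rw [eLpNorm_nnreal_pow_eq_lintegral hp, eLpNorm_nnreal_pow_eq_lintegral hr]
          exact ENNReal.lintegral_mul_norm_pow_le (hf.enorm.pow_const _) (hf.enorm.pow_const _)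
            (by positivity) (by positivity) hweights
      _ = (eLpNorm f p μ ^ s * eLpNorm f r μ ^ t) ^ (q : ℝ) := by
          rw [ENNReal.mul_rpow_of_nonneg _ _ q.coe_nonneg]
          simp only [← ENNReal.rpow_mul]
          congr 2 <;> field_simp
  exact (ENNReal.rpow_le_rpow_iff (by positivity)).1 hpow

end LpNorm

section Tonelli

variable {α β γ : Type*} [MeasurableSpace α] [MeasurableSpace β] [MeasurableSpace γ]
  {μ : Measure α} {ν : Measure β} {ρ : Measure γ} [SFinite μ] [SFinite ν] [SFinite ρ]

lemma lintegral_sq_lintegral_le_mul {u w₁ w₂ : (α × β) × γ → ℝ≥0∞} (hw₁ : Measurable w₁)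
    (hw₂ : Measurable w₂) (h₁ : ∀ x y z, u ((x, y), z) ≤ ∫⁻ s, w₁ ((s, y), z) ∂μ)
    (h₂ : ∀ x y z, u ((x, y), z) ≤ ∫⁻ s, w₂ ((x, s), z) ∂ν) :
    ∫⁻ p, (∫⁻ z, u (p, z) ∂ρ) ^ 2 ∂(μ.prod ν) ≤
      (∫⁻ x, w₁ x ∂((μ.prod ν).prod ρ)) * ∫⁻ x, w₂ x ∂((μ.prod ν).prod ρ) := by
  set W₁ : β → ℝ≥0∞ := fun y => ∫⁻ z, ∫⁻ x, w₁ ((x, y), z) ∂μ ∂ρ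
  set W₂ : α → ℝ≥0∞ := fun x => ∫⁻ z, ∫⁻ y, w₂ ((x, y), z) ∂ν ∂ρ
  have hW₁ : ∫⁻ x, w₁ x ∂((μ.prod ν).prod ρ) = ∫⁻ y, W₁ y ∂ν := by
    rw [lintegral_prod _ hw₁.aemeasurable,
      lintegral_prod_symm _ (hw₁.lintegral_prod_right').aemeasurable]
    exact lintegral_congr fun y => lintegral_lintegral_swap
      (hw₁.comp (by fun_prop : Measurable fun q : α × γ => ((q.1, y), q.2))).aemeasurable
  have hW₂ : ∫⁻ x, w₂ x ∂((μ.prod ν).prod ρ) = ∫⁻ x, W₂ x ∂μ := by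
    rw [lintegral_prod _ hw₂.aemeasurable,
      lintegral_prod _ (hw₂.lintegral_prod_right').aemeasurable]
    exact lintegral_congr fun x => lintegral_lintegral_swap
      (hw₂.comp (by fun_prop : Measurable fun q : β × γ => ((x, q.1), q.2))).aemeasurable
  have hW₁_meas : Measurable W₁ := by
    fun_prop
  have hW₂_meas : Measurable W₂ := by
    fun_prop
  calc ∫⁻ p, (∫⁻ z, u (p, z) ∂ρ) ^ 2 ∂(μ.prod ν) ≤ ∫⁻ p, W₂ p.1 * W₁ p.2 ∂(μ.prod ν) := by
        refine lintegral_mono fun p => ?_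
        rw [sq]
        exact mul_le_mul' (lintegral_mono fun z => h₂ p.1 p.2 z)
          (lintegral_mono fun z => h₁ p.1 p.2 z)
    _ = (∫⁻ x, W₂ x ∂μ) * ∫⁻ y, W₁ y ∂ν :=
        lintegral_prod_mul hW₂_meas.aemeasurable hW₁_meas.aemeasurable
    _ = (∫⁻ x, w₁ x ∂((μ.prod ν).prod ρ)) * ∫⁻ x, w₂ x ∂((μ.prod ν).prod ρ) := by
        rw [hW₁, hW₂, mul_comm]

end Tonelli

section Coordinates

lemma measurePreserving_toR2 : MeasurePreserving (fun p : ℝ × ℝ => (!₂[p.1, p.2] : R2)) :=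
  (PiLp.volume_preserving_toLp (Fin 2)).comp (volume_preserving_finTwoArrow ℝ).symm

lemma measurePreserving_pt3 :
    MeasurePreserving (fun p : (ℝ × ℝ) × ℝ => pt3 p.1.1 p.1.2 p.2) := by
  have hsplit := (volume_preserving_piFinSuccAbove (fun _ : Fin 3 => ℝ) 2).symm
  have hprod := (MeasurePreserving.id (volume : Measure ℝ)).prod
    (volume_preserving_finTwoArrow ℝ).symm
  convert (PiLp.volume_preserving_toLp (Fin 3)).comp
    (hsplit.comp (hprod.comp Measure.measurePreserving_swap)) using 1
  · ext p i
    fin_cases i <;> rfl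
  · rfl

lemma pt3_eq_add_smul_single_zero (x y z : ℝ) :
    pt3 x y z = pt3 0 y z + x • EuclideanSpace.single 0 1 := by
  ext i
  fin_cases i <;> simp [pt3]

lemma pt3_eq_add_smul_single_one (x y z : ℝ) :
    pt3 x y z = pt3 x 0 z + y • EuclideanSpace.single 1 1 := by
  ext i
  fin_cases i <;> simp [pt3]

end Coordinates

section MixedNorm

variable {E : Type*} [NormedAddCommGroup E]

/-- The norm `‖f(x_h, ·)‖_{L^q(ℝ_v)}` as a function of `x_h`. Unlike the inner norm of `mixedNorm`
it takes the value `∞` on lines where `f` fails to be `L^q`. -/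
def verticalNorm (q : ℝ≥0∞) (f : R3 → E) (xh : R2) : ℝ≥0∞ :=
  eLpNorm (fun z : ℝ => f (pt3 (xh 0) (xh 1) z)) q volume

lemma mixedNorm_le_eLpNorm_verticalNorm (p q : ℝ≥0∞) (f : R3 → E) :
    mixedNorm p q f ≤ eLpNorm (verticalNorm q f) p volume :=
  eLpNorm_mono_enorm fun _ => by
    simpa [verticalNorm, Real.enorm_of_nonneg] using ENNReal.ofReal_toReal_le

lemma verticalNorm_two_sq (f : R3 → E) (xh : R2) :
    verticalNorm 2 f xh ^ 2 = ∫⁻ z, ‖f (pt3 (xh 0) (xh 1) z)‖ₑ ^ 2 :=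
  eLpNorm_natCast_pow_eq_lintegral _ two_ne_zero

lemma measurable_verticalNorm {q : ℝ≥0∞} (hq0 : q ≠ 0) (hq_top : q ≠ ∞) {f : R3 → E}
    (hf : Measurable fun x => ‖f x‖ₑ) : Measurable (verticalNorm q f) := by
  have hpt3 : Measurable fun p : R2 × ℝ => pt3 (p.1 0) (p.1 1) p.2 :=
    measurePreserving_pt3.measurable.comp
      (by fun_prop : Measurable fun p : R2 × ℝ => ((p.1 0, p.1 1), p.2))
  unfold verticalNorm
  simp only [eLpNorm_eq_lintegral_rpow_enorm_toReal hq0 hq_top]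
  exact ((hf.comp hpt3).pow_const q.toReal).lintegral_prod_right'.pow_const _

lemma eLpNorm_verticalNorm_two {f : R3 → E} (hf : Measurable fun x => ‖f x‖ₑ) :
    eLpNorm (verticalNorm 2 f) 2 volume = eLpNorm f 2 volume := by
  have hmeas := measurable_verticalNorm two_ne_zero ENNReal.ofNat_ne_top hf
  suffices hsq : eLpNorm (verticalNorm 2 f) (2 : ℕ) volume ^ 2 = eLpNorm f (2 : ℕ) volume ^ 2 from
    (ENNReal.pow_right_strictMono two_ne_zero).injective hsq
  calc eLpNorm (verticalNorm 2 f) (2 : ℕ) volume ^ 2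
      = ∫⁻ xh, verticalNorm 2 f xh ^ 2 := eLpNorm_natCast_pow_eq_lintegral _ two_ne_zero
    _ = ∫⁻ p : ℝ × ℝ, ∫⁻ z, ‖f (pt3 p.1 p.2 z)‖ₑ ^ 2 := by
        rw [← measurePreserving_toR2.lintegral_comp (hmeas.pow_const 2)]
        exact lintegral_congr fun p => verticalNorm_two_sq f _
    _ = ∫⁻ x, ‖f x‖ₑ ^ 2 := by
        rw [← measurePreserving_pt3.lintegral_comp (hf.pow_const 2)]
        exact (lintegral_prod _ ((hf.pow_const 2).comp
          measurePreserving_pt3.measurable).aemeasurable).symm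
    _ = eLpNorm f (2 : ℕ) volume ^ 2 := (eLpNorm_natCast_pow_eq_lintegral _ two_ne_zero).symm

end MixedNorm

section Gradient

variable {E : Type*} [NormedAddCommGroup E] [NormedSpace ℝ E]

/-- The horizontal gradient `∇_h f = (∂₁ f, ∂₂ f)`, with the maximum norm of the product. -/
def horizontalGrad (f : R3 → E) (x : R3) : E × E := (pderiv3 0 f x, pderiv3 1 f x)

variable {f : R3 → E}

lemma continuous_horizontalGrad (hf : ContDiff ℝ 1 f) : Continuous (horizontalGrad f) := by
  have hfderiv : Continuous (fderiv ℝ f) := hf.continuous_fderiv one_ne_zero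
  exact (hfderiv.clm_apply continuous_const).prodMk (hfderiv.clm_apply continuous_const)

lemma enorm_sq_le_two_mul_lintegral_horizontalGrad_fst (hf : Differentiable ℝ f)
    (hf_lim : Tendsto f (cocompact R3) (𝓝 0)) (x y z : ℝ) :
    ‖f (pt3 x y z)‖ₑ ^ 2 ≤
      2 * ∫⁻ s, ‖f (pt3 s y z)‖ₑ * ‖horizontalGrad f (pt3 s y z)‖ₑ := by
  calc ‖f (pt3 x y z)‖ₑ ^ 2 ≤ 2 * ∫⁻ s, ‖f (pt3 s y z)‖ₑ * ‖pderiv3 0 f (pt3 s y z)‖ₑ := by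
        simpa only [pderiv3, ← pt3_eq_add_smul_single_zero] using
          enorm_sq_le_two_mul_lintegral_line hf hf_lim (pt3 0 y z)
            (v := EuclideanSpace.single 0 1) (by simp) x
    _ ≤ 2 * ∫⁻ s, ‖f (pt3 s y z)‖ₑ * ‖horizontalGrad f (pt3 s y z)‖ₑ := by
        gcongr
        exact enorm_le_iff_norm_le.2 (norm_fst_le (horizontalGrad f _))

lemma enorm_sq_le_two_mul_lintegral_horizontalGrad_snd (hf : Differentiable ℝ f)
    (hf_lim : Tendsto f (cocompact R3) (𝓝 0)) (x y z : ℝ) :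
    ‖f (pt3 x y z)‖ₑ ^ 2 ≤
      2 * ∫⁻ s, ‖f (pt3 x s z)‖ₑ * ‖horizontalGrad f (pt3 x s z)‖ₑ := by
  calc ‖f (pt3 x y z)‖ₑ ^ 2 ≤ 2 * ∫⁻ s, ‖f (pt3 x s z)‖ₑ * ‖pderiv3 1 f (pt3 x s z)‖ₑ := by
        simpa only [pderiv3, ← pt3_eq_add_smul_single_one] using
          enorm_sq_le_two_mul_lintegral_line hf hf_lim (pt3 x 0 z)
            (v := EuclideanSpace.single 1 1) (by simp) y
    _ ≤ 2 * ∫⁻ s, ‖f (pt3 x s z)‖ₑ * ‖horizontalGrad f (pt3 x s z)‖ₑ := by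
        gcongr
        exact enorm_le_iff_norm_le.2 (norm_snd_le (horizontalGrad f _))

lemma eLpNorm_four_verticalNorm_two_sq_le (hf : ContDiff ℝ 1 f)
    (hf_lim : Tendsto f (cocompact R3) (𝓝 0)) :
    eLpNorm (verticalNorm 2 f) 4 volume ^ 2 ≤
      2 * (eLpNorm f 2 volume * eLpNorm (horizontalGrad f) 2 volume) := by
  have hdiff : Differentiable ℝ f := hf.differentiable one_ne_zero
  have hgrad : Continuous (horizontalGrad f) := continuous_horizontalGrad hf
  have hmeas : Measurable (verticalNorm 2 f) :=
    measurable_verticalNorm two_ne_zero ENNReal.ofNat_ne_top hf.continuous.enorm.measurable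
  set w : R3 → ℝ≥0∞ := fun x => ‖f x‖ₑ * ‖horizontalGrad f x‖ₑ
  have hw : Measurable w := hf.continuous.enorm.measurable.mul hgrad.enorm.measurable
  have hw_pt3 : Measurable fun p : (ℝ × ℝ) × ℝ => 2 * w (pt3 p.1.1 p.1.2 p.2) :=
    (hw.comp measurePreserving_pt3.measurable).const_mul 2
  refine (ENNReal.pow_right_strictMono two_ne_zero).le_iff_le.1 ?_
  calc (eLpNorm (verticalNorm 2 f) 4 volume ^ 2) ^ 2
      = ∫⁻ xh, verticalNorm 2 f xh ^ 4 := by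
        rw [← pow_mul]
        exact eLpNorm_natCast_pow_eq_lintegral _ four_ne_zero
    _ = ∫⁻ p : ℝ × ℝ, (∫⁻ z, ‖f (pt3 p.1 p.2 z)‖ₑ ^ 2) ^ 2 := by
        rw [← measurePreserving_toR2.lintegral_comp (hmeas.pow_const 4)]
        refine lintegral_congr fun p => ?_
        rw [show 4 = 2 * 2 from rfl, pow_mul, verticalNorm_two_sq]
        rfl
    _ ≤ (∫⁻ p : (ℝ × ℝ) × ℝ, 2 * w (pt3 p.1.1 p.1.2 p.2)) *
          ∫⁻ p : (ℝ × ℝ) × ℝ, 2 * w (pt3 p.1.1 p.1.2 p.2) := by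
        refine lintegral_sq_lintegral_le_mul
          (u := fun p : (ℝ × ℝ) × ℝ => ‖f (pt3 p.1.1 p.1.2 p.2)‖ₑ ^ 2) hw_pt3 hw_pt3
          (fun x y z => ?_) fun x y z => ?_
        · rw [lintegral_const_mul' _ _ ENNReal.ofNat_ne_top]
          exact enorm_sq_le_two_mul_lintegral_horizontalGrad_fst hdiff hf_lim x y z
        · rw [lintegral_const_mul' _ _ ENNReal.ofNat_ne_top]
          exact enorm_sq_le_two_mul_lintegral_horizontalGrad_snd hdiff hf_lim x y z
    _ = (2 * ∫⁻ x, w x) ^ 2 := by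
        rw [lintegral_const_mul' _ _ ENNReal.ofNat_ne_top,
          measurePreserving_pt3.lintegral_comp hw, sq]
    _ ≤ (2 * (eLpNorm f 2 volume * eLpNorm (horizontalGrad f) 2 volume)) ^ 2 := by
        gcongr
        exact lintegral_enorm_mul_enorm_le hf.continuous.aestronglyMeasurable
          hgrad.aestronglyMeasurable

lemma rpow_mul_two_mul_rpow_le (N D : ℝ≥0∞) {θ : ℝ} (h0 : 0 ≤ θ) (hθ : θ ≤ 1 / 2) :
    N ^ (1 - 2 * θ) * (2 * (N * D)) ^ θ ≤ 2 * N ^ (1 - θ) * D ^ θ := by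
  calc N ^ (1 - 2 * θ) * (2 * (N * D)) ^ θ
      = 2 ^ θ * (N ^ (1 - 2 * θ) * N ^ θ) * D ^ θ := by
        rw [ENNReal.mul_rpow_of_nonneg _ _ h0, ENNReal.mul_rpow_of_nonneg _ _ h0]
        ring
    _ = 2 ^ θ * N ^ (1 - θ) * D ^ θ := by
        rw [← ENNReal.rpow_add_of_nonneg _ _ (by linarith) h0]
        congr 3
        ring
    _ ≤ 2 * N ^ (1 - θ) * D ^ θ := by
        gcongr
        calc (2 : ℝ≥0∞) ^ θ ≤ 2 ^ (1 : ℝ) :=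
              ENNReal.rpow_le_rpow_of_exponent_le one_le_two (by linarith)
          _ = 2 := ENNReal.rpow_one 2

theorem statement2_general (hf : ContDiff ℝ 1 f) (hf_lim : Tendsto f (cocompact R3) (𝓝 0))
    {q : ℝ} (hq : q ∈ Icc (2 : ℝ) 4) :
    mixedNorm (ENNReal.ofReal q) 2 f ≤
      2 * eLpNorm f 2 volume ^ (2 / q) * eLpNorm (horizontalGrad f) 2 volume ^ (1 - 2 / q) := by
  set N := eLpNorm f 2 volume
  set D := eLpNorm (horizontalGrad f) 2 volume
  set F := verticalNorm 2 f
  have hf_enorm : Measurable fun x => ‖f x‖ₑ := hf.continuous.enorm.measurable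
  have hF : AEStronglyMeasurable F volume :=
    (measurable_verticalNorm two_ne_zero ENNReal.ofNat_ne_top hf_enorm).aestronglyMeasurable
  have hq0 : 0 < q := two_pos.trans_le hq.1
  obtain ⟨θ, hθ⟩ : ∃ θ, θ = 1 - 2 / q := ⟨_, rfl⟩
  have hθ0 : 0 ≤ θ := by
    rw [hθ, sub_nonneg, div_le_one hq0]
    exact hq.1
  have hθ_half : θ ≤ 1 / 2 := by
    rw [hθ, sub_le_comm, le_div_iff₀ hq0]
    linarith [hq.2]
  have hq_inv : (q.toNNReal : ℝ)⁻¹ = (1 - 2 * θ) / (2 : ℝ≥0) + 2 * θ / (4 : ℝ≥0) := by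
    rw [Real.coe_toNNReal _ hq0.le, hθ]
    push_cast
    ring
  calc mixedNorm (ENNReal.ofReal q) 2 f ≤ eLpNorm F (ENNReal.ofReal q) volume :=
        mixedNorm_le_eLpNorm_verticalNorm _ _ _
    _ ≤ eLpNorm F 2 volume ^ (1 - 2 * θ) * eLpNorm F 4 volume ^ (2 * θ) :=
        eLpNorm_le_eLpNorm_rpow_mul_eLpNorm_rpow hF two_ne_zero four_ne_zero (by linarith)
          (by linarith) (by ring) hq_inv
    _ = N ^ (1 - 2 * θ) * (eLpNorm F 4 volume ^ 2) ^ θ := by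
        rw [eLpNorm_verticalNorm_two hf_enorm, ENNReal.rpow_mul, ENNReal.rpow_two]
    _ ≤ N ^ (1 - 2 * θ) * (2 * (N * D)) ^ θ := by
        gcongr
        exact eLpNorm_four_verticalNorm_two_sq_le hf hf_lim
    _ ≤ 2 * N ^ (1 - θ) * D ^ θ := rpow_mul_two_mul_rpow_le N D hθ0 hθ_half
    _ = 2 * N ^ (2 / q) * D ^ (1 - 2 / q) := by rw [hθ, sub_sub_cancel]

end Gradient

end AnisotropicGagliardoNirenberg

/-- Anisotropic Gagliardo–Nirenberg inequality in mixed norms on `ℝ³`: for Schwartz `f` and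
`q ∈ [2,4]`, `‖f‖_{L^q_h(L²_v)} ≤ C·‖f‖_{L²}^{2/q}·‖∇_h f‖_{L²}^{1-2/q}` with `C`
independent of `f` and `q`. -/
theorem statement2 :
    ∃ C : ℝ, 0 < C ∧ ∀ (f : SchwartzMap R3 ℂ) (q : ℝ), q ∈ Set.Icc (2:ℝ) 4 →
      mixedNorm (ENNReal.ofReal q) 2 (⇑f) ≤
        ENNReal.ofReal C * eLpNorm (⇑f) 2 volume ^ (2 / q) *
          eLpNorm (fun x => (pderiv3 0 (⇑f) x, pderiv3 1 (⇑f) x)) 2 volume ^ (1 - 2 / q) := by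
  refine ⟨2, two_pos, fun f q hq => ?_⟩
  rw [ENNReal.ofReal_ofNat]
  exact statement2_general (f.smooth 1) f.tendsto_cocompact hq

end
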